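/- For every real number k ≥ 2, the supremum of χ*(G) over all finite loopless directed graphs G with ψ_d*(G) ≤ k equals k^k/(k−1)^{k−1}: every such G satisfies χ*(G) ≤ k^k/(k−1)^{k−1}, and for every ε > 0 there exists such a G with χ*(G) > k^k/(k−1)^{k−1} − ε. -/

import Mathlib

open Classical

/-- The underlying undirected simple graph of a digraph given by an arc relation `D`. -/
def underlying {V : Type*} (D : V → V → Prop) : SimpleGraph V := SimpleGraph.fromRel D

/-- `A` is an independent set of the simple graph `G`. -/
def IsIndepF {V : Type*} (G : SimpleGraph V) (A : Finset V) : Prop :=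
  ∀ u ∈ A, ∀ v ∈ A, ¬ G.Adj u v

/-- A fractional coloring of `G`: nonnegative weights on the independent sets of `G` such
that the sets containing any fixed vertex have total weight at least `1`. -/
structure FracColoring {V : Type*} [Fintype V] (G : SimpleGraph V) where
  x : Finset V → ℝ
  nonneg : ∀ A, 0 ≤ x A
  supp : ∀ A, x A ≠ 0 → IsIndepF G A
  cover : ∀ v : V, 1 ≤ ∑ A : Finset V, if v ∈ A then x A else 0

/-- The total weight of a fractional coloring. -/
noncomputable def totalWeight {V : Type*} [Fintype V] {G : SimpleGraph V}
    (f : FracColoring G) : ℝ :=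
  ∑ A : Finset V, f.x A

/-- The fractional chromatic number `χ*(G)`: the minimum total weight of a fractional
coloring of `G`. -/
noncomputable def fracChrom {V : Type*} [Fintype V] (G : SimpleGraph V) : ℝ :=
  sInf {w : ℝ | ∃ f : FracColoring G, w = totalWeight f}

/-- The local weight of a fractional coloring of a digraph `D`:
`1` plus the maximum over vertices `v` of the total weight of the independent sets meeting
the out-neighborhood of `v`. -/
noncomputable def localWeight {V : Type*} [Fintype V] (D : V → V → Prop)
    (f : FracColoring (underlying D)) : ℝ :=
  1 + ⨆ v : V, ∑ A : Finset V, if ∃ u ∈ A, D v u then f.x A else 0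

/-- The fractional directed local chromatic number `ψ_d*(D)`: the minimum local weight of a
fractional coloring of `D`. -/
noncomputable def fracDirLocal {V : Type*} [Fintype V] (D : V → V → Prop) : ℝ :=
  sInf {w : ℝ | ∃ f : FracColoring (underlying D), w = localWeight D f}


lemma push_coloring {V : Type*} [Fintype V] (G : SimpleGraph V) {ι : Type*} [Fintype ι]
    (w : ι → ℝ) (hw : ∀ i, 0 ≤ w i) (I : ι → Finset V) (hI : ∀ i, IsIndepF G (I i))
    (hc : ∀ v, 1 ≤ ∑ i, if v ∈ I i then w i else 0) :
    ∃ f : FracColoring G, ∀ (P : Finset V → Prop) [DecidablePred P],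
      (∑ A : Finset V, if P A then f.x A else 0) = ∑ i, if P (I i) then w i else 0 := by
  have key : ∀ (P : Finset V → Prop) [DecidablePred P],
      (∑ A : Finset V, if P A then (∑ i, if I i = A then w i else 0) else 0)
        = ∑ i, if P (I i) then w i else 0 := by
    intro P _
    have : ∀ A : Finset V, (if P A then (∑ i, if I i = A then w i else 0) else 0)
        = ∑ i, if I i = A then (if P (I i) then w i else 0) else 0 := by
      intro A
      split_ifs with h
      · refine Finset.sum_congr rfl fun i _ => ?_
        by_cases e : I i = A
        · subst e; simp [h]
        · simp [e]
      · symm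
        refine Finset.sum_eq_zero fun i _ => ?_
        by_cases e : I i = A
        · subst e; simp [h]
        · simp [e]
    rw [Finset.sum_congr rfl (fun A _ => this A), Finset.sum_comm]
    refine Finset.sum_congr rfl fun i _ => ?_
    simp
  refine ⟨⟨fun A => ∑ i, if I i = A then w i else 0, ?_, ?_, ?_⟩, ?_⟩
  · intro A
    exact Finset.sum_nonneg fun i _ => by split_ifs <;> simp [hw]
  · intro A hA
    obtain ⟨i, _, hi⟩ := Finset.exists_ne_zero_of_sum_ne_zero hA
    have : I i = A := by
      by_contra h
      simp [h] at hi
    exact this ▸ hI i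
  · intro v
    rw [key]
    exact hc v
  · intro P _
    exact key P

lemma exists_coloring {V : Type*} [Fintype V] (G : SimpleGraph V) : Nonempty (FracColoring G) := by
  obtain ⟨f, _⟩ := push_coloring G (ι := V) (fun _ => 1) (by simp) (fun v => {v})
    (by intro i u hu v hv; simp at hu hv; subst hu; subst hv; simp)
    (by intro v; simp)
  exact ⟨f⟩

lemma totalWeight_nonneg {V : Type*} [Fintype V] {G : SimpleGraph V} (f : FracColoring G) :
    0 ≤ totalWeight f := Finset.sum_nonneg fun A _ => f.nonneg A

lemma fracChrom_le {V : Type*} [Fintype V] {G : SimpleGraph V} (f : FracColoring G) :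
    fracChrom G ≤ totalWeight f := by
  refine csInf_le ⟨0, ?_⟩ ⟨f, rfl⟩
  rintro _ ⟨g, rfl⟩
  exact totalWeight_nonneg g

lemma fracDirLocal_le {V : Type*} [Fintype V] {D : V → V → Prop}
    (f : FracColoring (underlying D)) : fracDirLocal D ≤ localWeight D f := by
  refine csInf_le ⟨1, ?_⟩ ⟨f, rfl⟩
  rintro _ ⟨g, rfl⟩
  unfold localWeight
  have : 0 ≤ ⨆ v : V, ∑ A : Finset V, if ∃ u ∈ A, D v u then g.x A else 0 :=
    Real.iSup_nonneg fun v => Finset.sum_nonneg fun A _ => by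
      split_ifs <;> simp [g.nonneg]
  linarith

lemma prob_avoid {ι : Type*} [Fintype ι] [DecidableEq ι] (r : ι → ℝ) (T : Finset ι) :
    (∑ S : Finset ι, if Disjoint S T then (∏ i ∈ S, (1 - r i)) * ∏ i ∈ Sᶜ, r i else 0)
      = ∏ i ∈ T, r i := by
  have h := Finset.prod_add (fun i => if i ∈ T then 0 else 1 - r i) r (Finset.univ : Finset ι)
  have h1 : ∏ i, ((if i ∈ T then 0 else 1 - r i) + r i) = ∏ i ∈ T, r i := by
    rw [← Finset.prod_subset (Finset.subset_univ T)]
    · exact Finset.prod_congr rfl fun i hi => by simp [hi]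
    · intro i _ hi; simp [hi]
  rw [← h1, h, Finset.powerset_univ]
  refine Finset.sum_congr rfl fun S _ => ?_
  rw [← Finset.compl_eq_univ_sdiff]
  split_ifs with hd
  · congr 1
    refine Finset.prod_congr rfl fun i hi => ?_
    rw [if_neg (Finset.disjoint_left.1 hd hi)]
  · rw [Finset.not_disjoint_iff] at hd
    obtain ⟨i, hi, hT⟩ := hd
    rw [Finset.prod_eq_zero hi (by simp [hT]), zero_mul]

lemma upper_of_coloring {V : Type*} [Fintype V] (D : V → V → Prop) (hD : ∀ v, ¬ D v v)
    (f : FracColoring (underlying D)) (q w : ℝ) (hq0 : 0 < q) (hq1 : q < 1)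
    (hw : localWeight D f ≤ w) :
    fracChrom (underlying D) ≤ (q ^ (w - 1) * (1 - q))⁻¹ := by
  set X : V → Finset (Finset V) := fun v => Finset.univ.filter fun A => v ∈ A with hX
  set T : V → Finset (Finset V) := fun v => Finset.univ.filter fun A => ∃ u ∈ A, D v u with hT
  set r : Finset V → ℝ := fun A => q ^ f.x A with hr
  have hr0 : ∀ A, 0 < r A := fun A => Real.rpow_pos_of_pos hq0 _
  have hr1 : ∀ A, r A ≤ 1 := fun A => Real.rpow_le_one hq0.le hq1.le (f.nonneg A)
  set p : Finset (Finset V) → ℝ := fun S => (∏ i ∈ S, (1 - r i)) * ∏ i ∈ Sᶜ, r i with hp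
  have hp0 : ∀ S, 0 ≤ p S := fun S => mul_nonneg
    (Finset.prod_nonneg fun i _ => by linarith [hr1 i]) (Finset.prod_nonneg fun i _ => (hr0 i).le)
  have hprod : ∀ S : Finset (Finset V), ∏ A ∈ S, r A = q ^ (∑ A ∈ S, f.x A) := by
    intro S
    rw [Real.rpow_sum_of_pos hq0]
  set I : Finset (Finset V) → Finset V := fun S =>
    Finset.univ.filter fun v => ¬ Disjoint S (X v) ∧ Disjoint S (T v) with hI
  set c := q ^ (w - 1) * (1 - q) with hc
  have hc0 : 0 < c := mul_pos (Real.rpow_pos_of_pos hq0 _) (by linarith)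
  have hind0 : ∀ S u v, u ∈ I S → v ∈ I S → ¬ D u v := by
    intro S u v hu hv hd
    simp only [hI, Finset.mem_filter, Finset.mem_univ, true_and] at hu hv
    obtain ⟨A, hA, hAX⟩ := Finset.not_disjoint_iff.1 hv.1
    refine Finset.disjoint_left.1 hu.2 hA ?_
    simp only [hX, hT, Finset.mem_filter, Finset.mem_univ, true_and] at hAX ⊢
    exact ⟨v, hAX, hd⟩
  have hind : ∀ S, IsIndepF (underlying D) (I S) := by
    intro S u hu v hv hadj
    rw [underlying, SimpleGraph.fromRel_adj] at hadj
    rcases hadj.2 with h | h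
    · exact hind0 S u v hu hv h
    · exact hind0 S v u hv hu h
  have hprob : ∀ v, (∑ S, if v ∈ I S then p S else 0)
      = q ^ (∑ A ∈ T v, f.x A) - q ^ (∑ A ∈ T v ∪ X v, f.x A) := by
    intro v
    rw [← hprod, ← hprod, ← prob_avoid, ← prob_avoid, ← Finset.sum_sub_distrib]
    refine Finset.sum_congr rfl fun S _ => ?_
    simp only [hI, Finset.mem_filter, Finset.mem_univ, true_and, Finset.disjoint_union_right]
    by_cases h1 : Disjoint S (X v) <;> by_cases h2 : Disjoint S (T v) <;> simp [h1, h2, hp]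
  have hcov : ∀ v, c ≤ ∑ S, if v ∈ I S then p S else 0 := by
    intro v
    rw [hprob]
    have hinter : ∑ A ∈ T v ∩ X v, f.x A = 0 := by
      refine Finset.sum_eq_zero fun A hA => ?_
      simp only [hX, hT, Finset.mem_inter, Finset.mem_filter, Finset.mem_univ, true_and] at hA
      obtain ⟨⟨u, hu, hd⟩, hv⟩ := hA
      by_contra h
      refine f.supp A h v hv u hu ?_
      rw [underlying, SimpleGraph.fromRel_adj]
      refine ⟨?_, Or.inl hd⟩
      rintro rfl
      exact hD _ hd
    have hU := Finset.sum_union_inter (s₁ := T v) (s₂ := X v) (f := f.x)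
    rw [hinter, add_zero] at hU
    rw [hU, Real.rpow_add hq0]
    have hXs : 1 ≤ ∑ A ∈ X v, f.x A := by
      have := f.cover v
      rw [← Finset.sum_filter] at this
      exact this
    have hTs : ∑ A ∈ T v, f.x A ≤ w - 1 := by
      have h1 : (∑ A : Finset V, if ∃ u ∈ A, D v u then f.x A else 0) ≤ 
          ⨆ v : V, ∑ A : Finset V, if ∃ u ∈ A, D v u then f.x A else 0 :=
        le_ciSup (f := fun v => ∑ A : Finset V, if ∃ u ∈ A, D v u then f.x A else 0)
          (Set.finite_range _).bddAbove v
      rw [← Finset.sum_filter] at h1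
      unfold localWeight at hw
      have h2 : ∑ A ∈ T v, f.x A ≤ _ := h1
      linarith
    have e1 : q ^ (w - 1) ≤ q ^ (∑ A ∈ T v, f.x A) :=
      Real.rpow_le_rpow_of_exponent_ge hq0 hq1.le hTs
    have e2 : q ^ (∑ A ∈ X v, f.x A) ≤ q := by
      have := Real.rpow_le_rpow_of_exponent_ge hq0 hq1.le hXs
      rwa [Real.rpow_one] at this
    have := mul_le_mul e1 (show 1 - q ≤ 1 - q ^ (∑ A ∈ X v, f.x A) by linarith) (by linarith)
      (Real.rpow_pos_of_pos hq0 _).le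
    rw [hc]
    linarith
  obtain ⟨g, hg⟩ := push_coloring (underlying D) (fun S => c⁻¹ * p S)
    (fun S => mul_nonneg (inv_nonneg.2 hc0.le) (hp0 S)) I hind (by
      intro v
      have := hcov v
      have e : (∑ S, if v ∈ I S then c⁻¹ * p S else 0) = c⁻¹ * ∑ S, if v ∈ I S then p S else 0 := by
        rw [Finset.mul_sum]
        exact Finset.sum_congr rfl fun S _ => by split_ifs <;> simp
      rw [e, ← inv_mul_cancel₀ hc0.ne']
      exact mul_le_mul_of_nonneg_left this (inv_nonneg.2 hc0.le))
  have htot : totalWeight g = c⁻¹ := by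
    have h1 := hg (fun _ => True)
    have h2 := prob_avoid r ∅
    simp only [if_true, Finset.disjoint_empty_right, Finset.prod_empty] at h1 h2
    rw [totalWeight, h1, ← Finset.mul_sum, hp, h2, mul_one]
  exact (fracChrom_le g).trans htot.le

lemma upper_part (k : ℝ) (hk : 2 ≤ k) (n : ℕ) (D : Fin n → Fin n → Prop) (hD : ∀ v, ¬ D v v)
    (h : fracDirLocal D ≤ k) : fracChrom (underlying D) ≤ k ^ k / (k - 1) ^ (k - 1) := by
  have hk0 : 0 < k := by linarith
  have hk1 : 0 < k - 1 := by linarith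
  set q := (k - 1) / k with hq
  have hq0 : 0 < q := by positivity
  have hq1 : q < 1 := by rw [hq, div_lt_one hk0]; linarith
  have hval : (q ^ (k - 1) * (1 - q))⁻¹ = k ^ k / (k - 1) ^ (k - 1) := by
    have e : k ^ k = k ^ (k - 1) * k := by
      rw [← Real.rpow_add_one hk0.ne']; congr 1; ring
    rw [hq, Real.div_rpow hk1.le hk0.le, e]
    have a1 := (Real.rpow_pos_of_pos hk0 (k-1)).ne'
    have a2 := (Real.rpow_pos_of_pos hk1 (k-1)).ne'
    field_simp
    ring
  rw [← hval]
  have hcont : Filter.Tendsto (fun w : ℝ => (q ^ (w - 1) * (1 - q))⁻¹) (nhdsWithin k (Set.Ioi k))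
      (nhds (q ^ (k - 1) * (1 - q))⁻¹) := by
    have : ContinuousAt (fun w : ℝ => (q ^ (w - 1) * (1 - q))⁻¹) k := by
      refine ContinuousAt.inv₀ ?_ ?_
      · refine ContinuousAt.mul ?_ continuousAt_const
        exact (continuousAt_const).rpow (by fun_prop) (Or.inl hq0.ne')
      · exact (mul_pos (Real.rpow_pos_of_pos hq0 _) (by linarith)).ne'
    exact this.tendsto.mono_left nhdsWithin_le_nhds
  refine ge_of_tendsto hcont ?_
  filter_upwards [self_mem_nhdsWithin] with w hw
  have hlt : fracDirLocal D < w := lt_of_le_of_lt h hw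
  obtain ⟨f0⟩ := exists_coloring (underlying D)
  obtain ⟨_, ⟨f, rfl⟩, hf⟩ := exists_lt_of_csInf_lt (s := {w : ℝ | ∃ f : FracColoring (underlying D), w = localWeight D f}) ⟨_, f0, rfl⟩ hlt
  exact upper_of_coloring D hD f q w hq0 hq1 hf.le

lemma max_val (κ q : ℝ) (hκ : 1 < κ) (hq0 : 0 ≤ q) (hq1 : q ≤ 1) :
    (1 - q) * q ^ (κ - 1) ≤ (κ - 1) ^ (κ - 1) / κ ^ κ := by
  have hk0 : 0 < κ := by linarith
  have hk1 : 0 < κ - 1 := by linarith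
  have h := Real.geom_mean_le_arith_mean2_weighted (w₁ := 1 / κ) (w₂ := (κ - 1) / κ)
    (p₁ := 1 - q) (p₂ := q / (κ - 1)) (by positivity) (by positivity) (by linarith)
    (by positivity) (by field_simp; ring)
  have e : 1 / κ * (1 - q) + (κ - 1) / κ * (q / (κ - 1)) = 1 / κ := by
    field_simp; ring
  rw [e] at h
  have h1q : 0 ≤ 1 - q := by linarith
  have hp2 : 0 ≤ q / (κ - 1) := by positivity
  have h2 := Real.rpow_le_rpow (by positivity) h hk0.le
  rw [Real.mul_rpow (by positivity) (by positivity), ← Real.rpow_mul h1q, ← Real.rpow_mul hp2,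
    one_div_mul_cancel hk0.ne', div_mul_cancel₀ _ hk0.ne', Real.rpow_one,
    Real.div_rpow hq0 hk1.le, Real.div_rpow zero_le_one hk0.le, Real.one_rpow] at h2
  have a2 := Real.rpow_pos_of_pos hk1 (κ-1)
  have h3 := mul_le_mul_of_nonneg_right h2 a2.le
  have e3 : (1 - q) * (q ^ (κ - 1) / (κ - 1) ^ (κ - 1)) * (κ - 1) ^ (κ - 1)
      = (1 - q) * q ^ (κ - 1) := by field_simp
  rw [e3] at h3
  refine h3.trans (le_of_eq ?_)
  ring

open scoped FinsetFamily in
lemma kk_bound (m s t : ℕ) (hst : s ≤ t) (F B : Finset (Finset (Fin m)))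
    (hF : ∀ a ∈ F, a.card = s) (hB : ∀ b ∈ B, b.card = t)
    (hFB : ∀ a ∈ F, ∀ b ∈ B, ¬ a ⊆ b) (hne : B.Nonempty) :
    ∃ x, t ≤ x ∧ x ≤ m ∧ B.card ≤ (x + 1).choose t ∧ F.card + x.choose s ≤ m.choose s := by
  have hBs : (B : Set (Finset (Fin m))).Sized t := fun b hb => hB b hb
  have htm : t ≤ m := by
    obtain ⟨b, hb⟩ := hne
    rw [← hB b hb]
    simpa using Finset.card_le_univ b
  set x := Nat.findGreatest (fun x => x.choose t ≤ B.card) m with hx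
  have htx : t ≤ x := Nat.le_findGreatest htm (by simpa using hne.card_pos)
  have hxm : x ≤ m := Nat.findGreatest_le m
  have hxB : x.choose t ≤ B.card :=
    Nat.findGreatest_spec (P := fun x => x.choose t ≤ B.card) htm (by simpa using hne.card_pos)
  have hBm : B.card ≤ m.choose t := by
    have := hBs.card_le
    simpa using this
  refine ⟨x, htx, hxm, ?_, ?_⟩
  · rcases hxm.lt_or_eq with h | h
    · have := Nat.findGreatest_is_greatest (P := fun x => x.choose t ≤ B.card) (Nat.lt_succ_self x) h
      exact (not_le.1 this).le
    · rw [h]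
      exact hBm.trans (Nat.choose_le_choose t (Nat.le_succ m))
  · have kk := Finset.kruskal_katona_lovasz_form (i := t - s) (Nat.sub_le _ _) htx hxm hBs hxB
    rw [Nat.sub_sub_self hst] at kk
    have hsh : ((∂^[t - s] B : Finset (Finset (Fin m))) : Set (Finset (Fin m))).Sized s := by
      have := hBs.shadow_iterate (k := t - s)
      rwa [Nat.sub_sub_self hst] at this
    have hdis : Disjoint F (∂^[t - s] B) := by
      rw [Finset.disjoint_left]
      intro a haF ha
      rw [Finset.mem_shadow_iterate_iff_exists_sdiff] at ha
      obtain ⟨b, hb, hab, _⟩ := ha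
      exact hFB a haF b hb hab
    have hU : ((F ∪ ∂^[t - s] B : Finset (Finset (Fin m))) : Set (Finset (Fin m))).Sized s := by
      intro a ha
      rcases Finset.mem_union.1 (Finset.mem_coe.1 ha) with h | h
      · exact hF a h
      · exact hsh h
    have := hU.card_le
    rw [Finset.card_union_of_disjoint hdis] at this
    simp only [Fintype.card_fin] at this
    omega

lemma fact_choose_le (n r : ℕ) : (r.factorial : ℝ) * n.choose r ≤ (n : ℝ) ^ r := by
  have := Nat.descFactorial_le_pow n r
  rw [Nat.descFactorial_eq_factorial_mul_choose] at this
  exact_mod_cast this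

lemma le_fact_choose (n r : ℕ) (h : r ≤ n + 1) :
    ((n : ℝ) + 1 - r) ^ r ≤ (r.factorial : ℝ) * n.choose r := by
  have := Nat.pow_sub_le_descFactorial n r
  rw [Nat.descFactorial_eq_factorial_mul_choose] at this
  have h2 : (((n + 1 - r : ℕ) : ℝ)) ^ r ≤ (r.factorial : ℝ) * n.choose r := by exact_mod_cast this
  rw [Nat.cast_sub h] at h2
  simpa using h2

lemma num_bound (m s t x : ℕ) (hs : 1 ≤ s) (hst : s ≤ t) (htx : t ≤ x) (hxm : x ≤ m) (f b : ℝ)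
    (hf0 : 0 ≤ f) (hb0 : 0 ≤ b)
    (hf : f + x.choose s ≤ m.choose s) (hb : b ≤ (x + 1).choose t) (κ : ℝ) (hκ : κ = 1 + t / s) :
    (s.factorial : ℝ) * t.factorial * (f * b) ≤ ((m : ℝ) + 1) ^ (s + t) *
      ((κ - 1) ^ (κ - 1) / κ ^ κ + (s : ℝ) ^ 2 / ((m : ℝ) + 1)) := by
  set M : ℝ := (m : ℝ) + 1 with hM
  set y : ℝ := (x : ℝ) + 1 with hy
  have hs0 : (0 : ℝ) < s := by exact_mod_cast hs
  have hsx : (s : ℝ) ≤ x := by exact_mod_cast hst.trans htx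
  have hy0 : 0 < y := by positivity
  have hM0 : 0 < M := by positivity
  have hyM : y ≤ M := by
    have : (x : ℝ) ≤ m := by exact_mod_cast hxm
    linarith
  have h1 := fact_choose_le m s
  have h2 := le_fact_choose x s (by omega)
  have h3 := fact_choose_le (x + 1) t
  push_cast at h3
  have hmM : (m : ℝ) ^ s ≤ M ^ s := pow_le_pow_left₀ (by positivity) (by linarith) s
  have hbern : y ^ s * (1 - s ^ 2 / y) ≤ (y - s) ^ s := by
    have hb := one_add_mul_le_pow (a := -(s : ℝ) / y) (by
      rw [le_div_iff₀ hy0]; linarith) s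
    have : (y - s) ^ s = y ^ s * (1 + -(s : ℝ) / y) ^ s := by
      rw [← mul_pow]; congr 1; field_simp; ring
    rw [this]
    refine mul_le_mul_of_nonneg_left (le_trans (le_of_eq ?_) hb) (by positivity)
    ring
  have hfs : (s.factorial : ℝ) * f ≤ M ^ s - y ^ s * (1 - s ^ 2 / y) := by
    have := mul_le_mul_of_nonneg_left hf (show (0 : ℝ) ≤ s.factorial by positivity)
    linarith
  have hbt : (t.factorial : ℝ) * b ≤ y ^ t :=
    (mul_le_mul_of_nonneg_left hb (show (0 : ℝ) ≤ t.factorial by positivity)).trans h3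
  have hprod : (s.factorial : ℝ) * t.factorial * (f * b) ≤
      (M ^ s - y ^ s * (1 - s ^ 2 / y)) * y ^ t := by
    calc _ = ((s.factorial : ℝ) * f) * (t.factorial * b) := by ring
      _ ≤ _ := mul_le_mul hfs hbt (by positivity) ((by positivity : (0 : ℝ) ≤ _).trans hfs)
  refine hprod.trans ?_
  set z := y / M with hz
  have hyz : y = z * M := by rw [hz]; field_simp
  have hz0 : 0 < z := by positivity
  have hz1 : z ≤ 1 := by rw [hz, div_le_one hM0]; exact hyM
  have hmax := max_val κ (z ^ s) (by rw [hκ]; have : (0 : ℝ) < t := by linarith [show (s : ℝ) ≤ t by exact_mod_cast hst]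
                                     have : (0 : ℝ) < t / s := by positivity
                                     linarith) (by positivity) (pow_le_one₀ hz0.le hz1)
  have hpow : (z ^ s) ^ (κ - 1) = z ^ t := by
    rw [← Real.rpow_natCast z s, ← Real.rpow_mul hz0.le, ← Real.rpow_natCast z t]
    congr 1
    rw [hκ]; field_simp; ring
  rw [hpow] at hmax
  have hsmall : z ^ (s + t) / z ≤ 1 := by
    rw [div_le_one hz0]
    calc z ^ (s + t) ≤ z ^ 1 := pow_le_pow_of_le_one hz0.le hz1 (by omega)
      _ = z := pow_one z
  have e : (M ^ s - y ^ s * (1 - s ^ 2 / y)) * y ^ t =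
      M ^ (s + t) * ((1 - z ^ s) * z ^ t + (s : ℝ) ^ 2 / M * (z ^ (s + t) / z)) := by
    rw [hyz]
    field_simp
    ring
  rw [e]
  have h5 : (s : ℝ) ^ 2 / M * (z ^ (s + t) / z) ≤ (s : ℝ) ^ 2 / M :=
    mul_le_of_le_one_right (by positivity) hsmall
  exact mul_le_mul_of_nonneg_left (add_le_add hmax h5) (by positivity)

lemma le_fracChrom {V : Type*} [Fintype V] (G : SimpleGraph V) (U N L : ℝ) (hU : 0 < U) (hN : 0 ≤ N)
    (hA : ∀ A : Finset V, IsIndepF G A → N * A.card ≤ U) (hL : L ≤ N * Fintype.card V / U) :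
    L ≤ fracChrom G := by
  obtain ⟨f0⟩ := exists_coloring G
  refine hL.trans (le_csInf ⟨_, f0, rfl⟩ ?_)
  rintro _ ⟨f, rfl⟩
  rw [div_le_iff₀ hU]
  have h1 : (Fintype.card V : ℝ) ≤ ∑ A : Finset V, f.x A * A.card := by
    calc (Fintype.card V : ℝ) = ∑ v : V, (1 : ℝ) := by simp
      _ ≤ ∑ v : V, ∑ A : Finset V, if v ∈ A then f.x A else 0 :=
        Finset.sum_le_sum fun v _ => f.cover v
      _ = ∑ A : Finset V, f.x A * A.card := by
        rw [Finset.sum_comm]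
        refine Finset.sum_congr rfl fun A _ => ?_
        rw [← Finset.sum_filter]
        simp [mul_comm]
  calc N * Fintype.card V ≤ N * ∑ A : Finset V, f.x A * A.card := mul_le_mul_of_nonneg_left h1 hN
    _ = ∑ A : Finset V, f.x A * (N * A.card) := by
      rw [Finset.mul_sum]; exact Finset.sum_congr rfl fun A _ => by ring
    _ ≤ ∑ A : Finset V, f.x A * U := by
      refine Finset.sum_le_sum fun A _ => ?_
      by_cases h : f.x A = 0
      · simp [h]
      · exact mul_le_mul_of_nonneg_left (hA A (f.supp A h)) (f.nonneg A)
    _ = totalWeight f * U := by rw [totalWeight, Finset.sum_mul]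

abbrev PairV (m s t : ℕ) : Type :=
  {p : Finset (Fin m) × Finset (Fin m) // p.1.card = s ∧ p.2.card = t ∧ Disjoint p.1 p.2}

lemma card_pairV (m s t : ℕ) : Fintype.card (PairV m s t) = m.choose s * (m - s).choose t := by
  have e : PairV m s t ≃ Σ a : {a : Finset (Fin m) // a.card = s},
      {b : Finset (Fin m) // b ∈ Finset.powersetCard t (a.1)ᶜ} :=
    { toFun := fun p => ⟨⟨p.1.1, p.2.1⟩, ⟨p.1.2, by
        rw [Finset.mem_powersetCard]
        exact ⟨Finset.subset_compl_iff_disjoint_left.2 p.2.2.2, p.2.2.1⟩⟩⟩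
      invFun := fun q => ⟨(q.1.1, q.2.1), q.1.2, (Finset.mem_powersetCard.1 q.2.2).2,
        Finset.subset_compl_iff_disjoint_left.1 (Finset.mem_powersetCard.1 q.2.2).1⟩
      left_inv := fun p => rfl
      right_inv := fun q => rfl }
  rw [Fintype.card_congr e, Fintype.card_sigma]
  have : ∀ a : {a : Finset (Fin m) // a.card = s},
      Fintype.card {b : Finset (Fin m) // b ∈ Finset.powersetCard t (a.1)ᶜ} = (m - s).choose t := by
    intro a
    rw [Fintype.card_coe, Finset.card_powersetCard, Finset.card_compl, a.2, Fintype.card_fin]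
  rw [Finset.sum_congr rfl fun a _ => this a]
  simp

lemma lower_graph (k : ℝ) (m s t : ℕ) (hs : 1 ≤ s) (hst : s ≤ t) (hm : s + t ≤ m)
    (htk : (t : ℝ) / s ≤ k - 1) (κ : ℝ) (hκ : κ = 1 + t / s) :
    ∃ (n : ℕ) (D : Fin n → Fin n → Prop), (∀ v, ¬ D v v) ∧ fracDirLocal D ≤ k ∧
      ((m : ℝ) + 1 - (s + t)) ^ (s + t) / (((m : ℝ) + 1) ^ (s + t) *
      ((κ - 1) ^ (κ - 1) / κ ^ κ + (s : ℝ) ^ 2 / ((m : ℝ) + 1))) ≤ fracChrom (underlying D) := by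
  obtain ⟨e⟩ : Nonempty (Fin (Fintype.card (PairV m s t)) ≃ PairV m s t) :=
    ⟨(Fintype.equivFin _).symm⟩
  have hcard := card_pairV m s t
  generalize hn : Fintype.card (PairV m s t) = n at e hcard
  set a : Fin n → Finset (Fin m) := fun v => (e v).1.1 with ha
  set b : Fin n → Finset (Fin m) := fun v => (e v).1.2 with hb
  have has : ∀ v, (a v).card = s := fun v => (e v).2.1
  have hbt : ∀ v, (b v).card = t := fun v => (e v).2.2.1
  have hab : ∀ v, Disjoint (a v) (b v) := fun v => (e v).2.2.2
  have hinj : ∀ u v, a u = a v → b u = b v → u = v := fun u v h1 h2 =>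
    e.injective (Subtype.ext (Prod.ext h1 h2))
  have hs0 : (0 : ℝ) < s := by exact_mod_cast hs
  have hnsub : ∀ v, ¬ a v ⊆ b v := by
    intro v h
    have h2 := Finset.disjoint_self_iff_empty _ |>.1 ((hab v).mono_right h)
    have := has v
    rw [h2, Finset.card_empty] at this
    omega
  refine ⟨n, fun v u => a u ⊆ b v, hnsub, ?_, ?_⟩
  · obtain ⟨f, hf⟩ := push_coloring (underlying fun v u => a u ⊆ b v) (ι := Fin m)
      (fun _ => 1 / (s : ℝ)) (fun _ => by positivity)
      (fun i => Finset.univ.filter fun v => i ∈ a v)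
      (by
        intro i u hu v hv hadj
        simp only [Finset.mem_filter, Finset.mem_univ, true_and] at hu hv
        rw [underlying, SimpleGraph.fromRel_adj] at hadj
        rcases hadj.2 with h | h
        · exact Finset.disjoint_left.1 (hab u) hu (h hv)
        · exact Finset.disjoint_left.1 (hab v) hv (h hu))
      (by
        intro v
        simp only [Finset.mem_filter, Finset.mem_univ, true_and]
        rw [← Finset.sum_filter, Finset.sum_const]
        simp [has, hs0.ne'])
    refine (fracDirLocal_le f).trans ?_
    unfold localWeight
    have hk1 : 0 ≤ k - 1 := le_trans (by positivity) htk
    rw [← le_sub_iff_add_le']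
    · refine Real.iSup_le (fun v => ?_) hk1
      refine le_trans (le_of_eq (Eq.trans (Finset.sum_congr rfl fun A _ => ?_)
        (hf (fun A => ∃ u ∈ A, a u ⊆ b v)))) ?_
      · congr
      refine le_trans ?_ htk
      calc _ ≤ ∑ i : Fin m, if i ∈ b v then 1 / (s : ℝ) else 0 := by
            refine Finset.sum_le_sum fun i _ => ?_
            simp only [Finset.mem_filter, Finset.mem_univ, true_and]
            split_ifs with h1 h2 h2
            · exact le_rfl
            · obtain ⟨u, hu, hs⟩ := h1
              exact absurd (hs hu) h2
            · positivity
            · exact le_rfl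
        _ = (t : ℝ) / s := by
            rw [← Finset.sum_filter, Finset.sum_const]
            simp [hbt]
            ring
  · have hκ1 : 0 < κ - 1 := by
      rw [hκ]
      have : (0 : ℝ) < t := by exact_mod_cast (by omega : 0 < t)
      have : (0 : ℝ) < t / s := by positivity
      linarith
    have hκ0 : 0 < κ := by linarith
    refine le_fracChrom _ (((m : ℝ) + 1) ^ (s + t) *
      ((κ - 1) ^ (κ - 1) / κ ^ κ + (s : ℝ) ^ 2 / ((m : ℝ) + 1))) ((s.factorial : ℝ) * t.factorial) _ ?_ (by positivity) ?_ ?_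
    · have a1 := Real.rpow_pos_of_pos hκ0 κ
      have a2 := Real.rpow_pos_of_pos hκ1 (κ-1)
      positivity
    · intro A hA
      by_cases hne : A.Nonempty
      · obtain ⟨x, htx, hxm, h1, h2⟩ := kk_bound m s t hst (A.image a) (A.image b)
          (by intro c hc; obtain ⟨v, _, rfl⟩ := Finset.mem_image.1 hc; exact has v)
          (by intro c hc; obtain ⟨v, _, rfl⟩ := Finset.mem_image.1 hc; exact hbt v)
          (by
            intro c hc d hd hcd
            obtain ⟨u, hu, rfl⟩ := Finset.mem_image.1 hc
            obtain ⟨v, hv, rfl⟩ := Finset.mem_image.1 hd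
            refine hA u hu v hv ?_
            rw [underlying, SimpleGraph.fromRel_adj]
            refine ⟨?_, Or.inr hcd⟩
            rintro rfl
            exact hnsub _ hcd)
          (hne.image b)
        have hc : A.card ≤ (A.image a).card * (A.image b).card := by
          rw [← Finset.card_product]
          refine Finset.card_le_card_of_injOn (fun v => (a v, b v)) ?_ ?_
          · intro v hv
            exact Finset.mem_coe.2 (Finset.mem_product.2 ⟨Finset.mem_image_of_mem a hv, Finset.mem_image_of_mem b hv⟩)
          · intro u _ v _ h
            exact hinj u v (Prod.ext_iff.1 h).1 (Prod.ext_iff.1 h).2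
        have hc' : (A.card : ℝ) ≤ ((A.image a).card : ℝ) * (A.image b).card := by exact_mod_cast hc
        refine le_trans (mul_le_mul_of_nonneg_left hc' (by positivity)) ?_
        exact num_bound m s t x hs hst htx hxm _ _ (by positivity) (by positivity)
          (by exact_mod_cast h2) (by exact_mod_cast h1) κ hκ
      · rw [Finset.not_nonempty_iff_eq_empty.1 hne]
        have a1 := Real.rpow_pos_of_pos hκ0 κ
        have a2 := Real.rpow_pos_of_pos hκ1 (κ-1)
        simp only [Finset.card_empty, Nat.cast_zero, mul_zero]
        positivity
    · have a1 := Real.rpow_pos_of_pos hκ0 κ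
      have a2 := Real.rpow_pos_of_pos hκ1 (κ-1)
      refine div_le_div_of_nonneg_right ?_ (by positivity)
      rw [Fintype.card_fin, hcard]
      have h1 := le_fact_choose m s (by omega)
      have h2 := le_fact_choose (m - s) t (by omega)
      rw [Nat.cast_sub (by omega)] at h2
      have hm' : (s : ℝ) + t ≤ m := by exact_mod_cast hm
      have ht0 : (0 : ℝ) ≤ t := by positivity
      push_cast
      calc ((m : ℝ) + 1 - (s + t)) ^ (s + t) = ((m : ℝ) + 1 - (s + t)) ^ s * ((m : ℝ) + 1 - (s + t)) ^ t := pow_add _ _ _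
        _ ≤ ((m : ℝ) + 1 - s) ^ s * ((m : ℝ) - s + 1 - t) ^ t := by
          refine mul_le_mul (pow_le_pow_left₀ (by linarith) (by linarith) s)
            (pow_le_pow_left₀ (by linarith) (by linarith) t) (pow_nonneg (by linarith) _)
            (pow_nonneg (by linarith) _)
        _ ≤ _ := by
          refine le_trans (mul_le_mul h1 h2 (pow_nonneg (by linarith) _) (by positivity)) ?_
          exact le_of_eq (by ring)

lemma lower_part (k : ℝ) (hk : 2 ≤ k) (ε : ℝ) (hε : 0 < ε) :
    ∃ (n : ℕ) (D : Fin n → Fin n → Prop),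
      (∀ v, ¬ D v v) ∧ fracDirLocal D ≤ k ∧
      k ^ k / (k - 1) ^ (k - 1) - ε < fracChrom (underlying D) := by
  have hk0 : 0 < k := by linarith
  have hk1 : 0 < k - 1 := by linarith
  -- the approximating exponents
  have hlim : Filter.Tendsto (fun s : ℕ => 1 + ((⌊(k - 1) * (s : ℝ)⌋₊ : ℕ) : ℝ) / (s : ℝ))
      Filter.atTop (nhds k) := by
    have h := (tendsto_nat_floor_mul_div_atTop (R := ℝ) hk1.le).comp
      (tendsto_natCast_atTop_atTop (R := ℝ))
    have h2 := h.const_add 1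
    have e : 1 + (k - 1) = k := by ring
    rw [e] at h2
    exact h2
  have hcont : ContinuousAt (fun κ : ℝ => κ ^ κ / (κ - 1) ^ (κ - 1)) k := by
    refine ContinuousAt.div ?_ ?_ (Real.rpow_pos_of_pos hk1 _).ne'
    · exact continuousAt_id.rpow continuousAt_id (Or.inl hk0.ne')
    · exact ContinuousAt.rpow (by fun_prop) (by fun_prop) (Or.inl hk1.ne')
  have hev := (hcont.tendsto.comp hlim).eventually
    (lt_mem_nhds (show k ^ k / (k - 1) ^ (k - 1) - ε < k ^ k / (k - 1) ^ (k - 1) by linarith))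
  obtain ⟨s, hsev, hs⟩ := (hev.and (Filter.eventually_ge_atTop 1)).exists
  set t := ⌊(k - 1) * (s : ℝ)⌋₊ with ht
  have hs0 : (0 : ℝ) < s := by exact_mod_cast hs
  have hst : s ≤ t := by
    rw [ht]
    refine Nat.le_floor ?_
    nlinarith
  have htk : (t : ℝ) / s ≤ k - 1 := by
    rw [div_le_iff₀ hs0]
    exact Nat.floor_le (by positivity)
  simp only [Function.comp] at hsev
  set κ : ℝ := 1 + (t : ℝ) / s with hκ
  have hκ1 : 0 < κ - 1 := by
    have : (0 : ℝ) < t := by exact_mod_cast (by omega : 0 < t)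
    have : (0 : ℝ) < t / s := by positivity
    rw [hκ]; linarith
  have hκ0 : 0 < κ := by linarith
  have a1 := Real.rpow_pos_of_pos hκ0 κ
  have a2 := Real.rpow_pos_of_pos hκ1 (κ-1)
  have hM : Filter.Tendsto (fun m : ℕ => ((m : ℝ) + 1)) Filter.atTop Filter.atTop :=
    Filter.tendsto_atTop_add_const_right _ _ tendsto_natCast_atTop_atTop
  have hlim2 : Filter.Tendsto (fun m : ℕ => (1 - ((s : ℝ) + t) / ((m : ℝ) + 1)) ^ (s + t) /
      ((κ - 1) ^ (κ - 1) / κ ^ κ + (s : ℝ) ^ 2 / ((m : ℝ) + 1))) Filter.atTop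
      (nhds (κ ^ κ / (κ - 1) ^ (κ - 1))) := by
    have h1 := ((hM.const_div_atTop ((s : ℝ) + t)).const_sub 1).pow (s + t)
    have h2 := (hM.const_div_atTop ((s : ℝ) ^ 2)).const_add ((κ - 1) ^ (κ - 1) / κ ^ κ)
    have h3 := h1.div h2 (by simp only [add_zero]; positivity)
    have e : (1 - 0) ^ (s + t) / ((κ - 1) ^ (κ - 1) / κ ^ κ + 0) = κ ^ κ / (κ - 1) ^ (κ - 1) := by
      simp
    rw [e] at h3
    exact h3
  obtain ⟨m, hm1, hm2⟩ := ((hlim2.eventually (lt_mem_nhds hsev)).and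
    (Filter.eventually_ge_atTop (s + t))).exists
  obtain ⟨n, D, hD1, hD2, hD3⟩ := lower_graph k m s t hs hst hm2 htk κ hκ
  refine ⟨n, D, hD1, hD2, lt_of_lt_of_le hm1 (le_trans (le_of_eq ?_) hD3)⟩
  have hM0 : (0 : ℝ) < (m : ℝ) + 1 := by positivity
  have e : (m : ℝ) + 1 - (s + t) = ((m : ℝ) + 1) * (1 - ((s : ℝ) + t) / ((m : ℝ) + 1)) := by
    field_simp
  rw [e, mul_pow, mul_div_mul_left _ _ (by positivity)]

/-- For every real `k ≥ 2`, the supremum of `χ*` over finite loopless digraphs with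
`ψ_d* ≤ k` equals `k^k/(k-1)^(k-1)` (real powers): it is an upper bound, and it is
approached within any `ε > 0`. -/
theorem stmt10 (k : ℝ) (hk : 2 ≤ k) :
    (∀ (n : ℕ) (D : Fin n → Fin n → Prop), (∀ v, ¬ D v v) → fracDirLocal D ≤ k →
      fracChrom (underlying D) ≤ k ^ k / (k - 1) ^ (k - 1)) ∧
    (∀ ε : ℝ, 0 < ε → ∃ (n : ℕ) (D : Fin n → Fin n → Prop),
      (∀ v, ¬ D v v) ∧ fracDirLocal D ≤ k ∧
      k ^ k / (k - 1) ^ (k - 1) - ε < fracChrom (underlying D)) := by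
  exact ⟨upper_part k hk, lower_part k hk⟩
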